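/- arXiv:2007.02594 — 2 statements merged into one kernel-verified Lean document; each statement's English description precedes it below -/
import Mathlib

section
/- Let I be a finite index set, let (n_i)_{i∈I} and (b_i)_{i∈I} be families of positive integers, and let ε > 0 be a real number. Then there exist a positive integer p and positive integers (c_i)_{i∈I} such that b_i < c_i/p < b_i + ε for every i ∈ I, and such that for all i ≠ j in I the rational number n_i·c_j/c_i is not an integer. -/
/-!
Choose pairwise coprime `q i` exceeding `1 / ε` and every `n j`, and write the numbers
`b i + 1 / q i` over their common denominator `p = ∏ j, q j`, with numerators `c i`. For `j ≠ i`
the factor `q j` divides `c i` but is coprime to `c j`, so `c i ∣ n i * c j` would force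
`q j ∣ n i`, which is impossible for `0 < n i < q j`.
-/

open Finset Function

lemma exists_pairwise_coprime_forall_lt (I : Type*) [Countable I] (N : ℕ) :
    ∃ q : I → ℕ, Pairwise (Nat.Coprime on q) ∧ ∀ i, N < q i := by
  obtain ⟨f, hf⟩ := exists_injective_nat I
  refine ⟨fun i => Nat.fermatNumber (N + 1 + f i),
    Nat.pairwise_coprime_fermatNumber.comp_of_injective ((add_right_injective _).comp hf),
    fun i => ?_⟩
  calc
    N < N + 1 + f i := by lia
    _ ≤ Nat.fermatNumber (N + 1 + f i) := Nat.fermatNumber_strictMono.le_apply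

section PerturbedNumerator

variable {I : Type*} [Fintype I] [DecidableEq I] {q : I → ℕ}

/-- The numerator of the perturbed number `b i + 1 / q i` over the common denominator `∏ j, q j`.
The factor `q i` is left out of the product instead of dividing by it, to avoid natural-number
division. -/
def perturbedNumerator (q b : I → ℕ) (i : I) : ℕ :=
  (q i * b i + 1) * ∏ j ∈ univ.erase i, q j

lemma perturbedNumerator_pos (hq : ∀ i, 0 < q i) (b : I → ℕ) (i : I) :
    0 < perturbedNumerator q b i :=
  Nat.mul_pos (Nat.succ_pos _) (prod_pos fun j _ => hq j)

lemma perturbedNumerator_div_prod {K : Type*} [Semifield K] [CharZero K]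
    (hq : ∀ i, 0 < q i) (b : I → ℕ) (i : I) :
    (perturbedNumerator q b i : K) / (∏ j, q j : ℕ) = b i + (q i : K)⁻¹ := by
  have hqi : (q i : K) ≠ 0 := Nat.cast_ne_zero.2 (hq i).ne'
  have hprod : ((∏ j ∈ univ.erase i, q j : ℕ) : K) ≠ 0 :=
    Nat.cast_ne_zero.2 (prod_pos fun j _ => hq j).ne'
  rw [perturbedNumerator, ← mul_prod_erase univ q (mem_univ i), Nat.cast_mul, Nat.cast_mul,
    mul_div_mul_right _ _ hprod, Nat.cast_add, Nat.cast_mul, Nat.cast_one, add_div,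
    mul_div_cancel_left₀ _ hqi, one_div]

lemma dvd_perturbedNumerator (q b : I → ℕ) {i j : I} (hij : i ≠ j) :
    q j ∣ perturbedNumerator q b i :=
  (dvd_prod_of_mem q (mem_erase.2 ⟨hij.symm, mem_univ j⟩)).mul_left _

lemma coprime_perturbedNumerator (hq : Pairwise (Nat.Coprime on q)) (b : I → ℕ) (i : I) :
    (q i).Coprime (perturbedNumerator q b i) := by
  have hfactor : (q i).Coprime (q i * b i + 1) := by simp
  exact hfactor.mul_right (Nat.Coprime.prod_right fun j hj => hq (ne_of_mem_erase hj).symm)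

lemma dvd_of_perturbedNumerator_dvd_mul (hq : Pairwise (Nat.Coprime on q)) {b : I → ℕ} {i j : I}
    (hij : i ≠ j) {m : ℕ} (h : perturbedNumerator q b i ∣ m * perturbedNumerator q b j) :
    q j ∣ m :=
  (coprime_perturbedNumerator hq b j).dvd_of_dvd_mul_right
    ((dvd_perturbedNumerator q b hij).trans h)

end PerturbedNumerator

/-- Given finite families of positive integers `n i`, `b i` and `ε > 0`,
there exist a positive integer `p` and positive integers `c i` with
`b i < c i / p < b i + ε` for all `i`, and `n i * c j / c i ∉ ℤ` for all `i ≠ j`. -/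
theorem stmt_0 {I : Type*} [Fintype I] (n b : I → ℕ)
    (hn : ∀ i, 0 < n i) (hb : ∀ i, 0 < b i) (ε : ℝ) (hε : 0 < ε) :
    ∃ (p : ℕ) (c : I → ℕ), 0 < p ∧ (∀ i, 0 < c i) ∧
      (∀ i, (b i : ℝ) < (c i : ℝ) / (p : ℝ) ∧ (c i : ℝ) / (p : ℝ) < (b i : ℝ) + ε) ∧
      (∀ i j, i ≠ j → ¬ ∃ z : ℤ, ((n i : ℚ) * (c j : ℚ)) / (c i : ℚ) = (z : ℚ)) := by
  classical
  obtain ⟨q, hcop, hq⟩ := exists_pairwise_coprime_forall_lt I (max (univ.sup n) ⌈ε⁻¹⌉₊)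
  have hpos (i : I) : 0 < q i := (Nat.zero_le _).trans_lt (hq i)
  have hnq (i j : I) : n i < q j :=
    (le_sup (mem_univ i)).trans_lt ((le_max_left _ _).trans_lt (hq j))
  have hqε (i : I) : (q i : ℝ)⁻¹ < ε :=
    inv_lt_of_inv_lt₀ hε (Nat.lt_of_ceil_lt ((le_max_right _ _).trans_lt (hq i)))
  refine ⟨∏ j, q j, perturbedNumerator q b, prod_pos fun j _ => hpos j,
    perturbedNumerator_pos hpos b, fun i => ?_, ?_⟩
  · rw [perturbedNumerator_div_prod hpos]
    exact ⟨lt_add_of_pos_right _ (inv_pos.2 (Nat.cast_pos.2 (hpos i))),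
      add_lt_add_right (hqε i) _⟩
  · rintro i j hij ⟨z, hz⟩
    have hdvd : perturbedNumerator q b i ∣ n i * perturbedNumerator q b j := by
      rw [← Rat.den_div_natCast_eq_one_iff _ _ (perturbedNumerator_pos hpos b i).ne',
        Nat.cast_mul, hz, Rat.den_intCast]
    exact Nat.not_dvd_of_pos_of_lt (hn i) (hnq i j)
      (dvd_of_perturbedNumerator_dvd_mul hcop hij hdvd)
end

section
/- Let J be a finite set; for each W ∈ J let N_W and n_W be positive integers, and for each nonempty subset J' ⊆ J let c_{J'} be an integer. In the field ℂ(s) of univariate rational functions define Z(s) = Σ_{∅≠J'⊆J} c_{J'} · Π_{W∈J'} 1/(N_W·s + n_W). Fix W₀ ∈ J such that n_{W₀}·N_W ≠ n_W·N_{W₀} for every W ∈ J∖{W₀}, and set r = −n_{W₀}/N_{W₀}. Then: (1) the rational function (N_{W₀}·s + n_{W₀})·Z(s) can be written as a quotient P(s)/Q(s) of polynomials with Q(r) ≠ 0, and its value at s = r equals R := Σ_{J'⊆J∖{W₀}} c_{J'∪{W₀}} · Π_{W∈J'} N_{W₀}/(N_{W₀}·n_W − N_W·n_{W₀}) (the empty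 product being 1); (2) r is a pole of Z of order exactly one if R ≠ 0, and Z has no pole at r if R = 0; in particular the pole order of Z at r is at most one. -/
open Polynomial

/-!
Write `L` for the linear form `N_{W₀} s + n_{W₀}`, which has a simple zero at `r`. By hypothesis no
other form `N_W s + n_W` vanishes at `r`. Sorting the subsets by whether they contain `W₀` gives
`L * Z = L * A + B` with `A` and `B` regular at `r` and `B` of value `R` there, so `L * Z` has value
`R`. Since the zero of `L` is simple, `Z` itself is regular at `r` exactly when this value is `0`.
-/

/-- The rational function `F` has no pole at `r`, i.e. it lies in the local ring of the affine line
at `r`. The witnessing fraction need not be in lowest terms. -/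
def IsRegularAt {K : Type*} [Field K] (F : RatFunc K) (r : K) : Prop :=
  ∃ P Q : K[X], F = algebraMap K[X] (RatFunc K) P / algebraMap K[X] (RatFunc K) Q ∧ Q.eval r ≠ 0

/-- The rational function `F` is regular at `r` and takes the value `v` there. Unlike
`RatFunc.eval`, which is `0` at a pole, this relation is compatible with sums and products without
side conditions. -/
def HasValueAt {K : Type*} [Field K] (F : RatFunc K) (r v : K) : Prop :=
  ∃ P Q : K[X], F = algebraMap K[X] (RatFunc K) P / algebraMap K[X] (RatFunc K) Q ∧
    Q.eval r ≠ 0 ∧ P.eval r / Q.eval r = v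

section Regular

variable {K : Type*} [Field K] {F G : RatFunc K} {r v w : K}

lemma isRegularAt_iff_exists_hasValueAt : IsRegularAt F r ↔ ∃ v, HasValueAt F r v :=
  ⟨fun ⟨P, Q, hF, hQ⟩ => ⟨_, P, Q, hF, hQ, rfl⟩, fun ⟨_, P, Q, hF, hQ, _⟩ => ⟨P, Q, hF, hQ⟩⟩

lemma algebraMap_ratFunc_ne_zero_of_eval_ne_zero {Q : K[X]} (hQ : Q.eval r ≠ 0) :
    algebraMap K[X] (RatFunc K) Q ≠ 0 :=
  RatFunc.algebraMap_ne_zero fun h => hQ (by rw [h, eval_zero])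

lemma hasValueAt_algebraMap (P : K[X]) (r : K) :
    HasValueAt (algebraMap K[X] (RatFunc K) P) r (P.eval r) :=
  ⟨P, 1, by simp, by simp, by simp⟩

lemma hasValueAt_C (a r : K) : HasValueAt (RatFunc.C a) r a := by
  simpa using hasValueAt_algebraMap (C a) r

namespace HasValueAt

lemma add (hF : HasValueAt F r v) (hG : HasValueAt G r w) : HasValueAt (F + G) r (v + w) := by
  obtain ⟨P, Q, rfl, hQ, rfl⟩ := hF
  obtain ⟨P', Q', rfl, hQ', rfl⟩ := hG
  refine ⟨P * Q' + Q * P', Q * Q', ?_, by simp [hQ, hQ'], ?_⟩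
  · simp only [div_add_div _ _ (algebraMap_ratFunc_ne_zero_of_eval_ne_zero hQ)
      (algebraMap_ratFunc_ne_zero_of_eval_ne_zero hQ'), map_add, map_mul]
  · simp only [div_add_div _ _ hQ hQ', eval_add, eval_mul]

lemma mul (hF : HasValueAt F r v) (hG : HasValueAt G r w) : HasValueAt (F * G) r (v * w) := by
  obtain ⟨P, Q, rfl, hQ, rfl⟩ := hF
  obtain ⟨P', Q', rfl, hQ', rfl⟩ := hG
  refine ⟨P * P', Q * Q', ?_, by simp [hQ, hQ'], ?_⟩
  · simp only [div_mul_div_comm, map_mul]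
  · simp only [div_mul_div_comm, eval_mul]

lemma inv (hF : HasValueAt F r v) (hv : v ≠ 0) : HasValueAt F⁻¹ r v⁻¹ := by
  obtain ⟨P, Q, rfl, -, rfl⟩ := hF
  exact ⟨Q, P, inv_div _ _, (div_ne_zero_iff.mp hv).1, (inv_div _ _).symm⟩

lemma sum {ι : Type*} {s : Finset ι} {f : ι → RatFunc K} {g : ι → K}
    (h : ∀ i ∈ s, HasValueAt (f i) r (g i)) : HasValueAt (∑ i ∈ s, f i) r (∑ i ∈ s, g i) := by
  induction s using Finset.cons_induction with
  | empty => simpa using hasValueAt_C 0 r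
  | cons i s hi ih =>
    rw [Finset.sum_cons, Finset.sum_cons]
    exact (h i (Finset.mem_cons_self i s)).add (ih fun j hj => h j (Finset.mem_cons_of_mem hj))

lemma prod {ι : Type*} {s : Finset ι} {f : ι → RatFunc K} {g : ι → K}
    (h : ∀ i ∈ s, HasValueAt (f i) r (g i)) : HasValueAt (∏ i ∈ s, f i) r (∏ i ∈ s, g i) := by
  induction s using Finset.cons_induction with
  | empty => simpa using hasValueAt_C 1 r
  | cons i s hi ih =>
    rw [Finset.prod_cons, Finset.prod_cons]
    exact (h i (Finset.mem_cons_self i s)).mul (ih fun j hj => h j (Finset.mem_cons_of_mem hj))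

lemma unique (hv : HasValueAt F r v) (hw : HasValueAt F r w) : v = w := by
  obtain ⟨P, Q, rfl, hQ, rfl⟩ := hv
  obtain ⟨P', Q', h, hQ', rfl⟩ := hw
  rw [div_eq_div_iff (algebraMap_ratFunc_ne_zero_of_eval_ne_zero hQ)
    (algebraMap_ratFunc_ne_zero_of_eval_ne_zero hQ'), ← map_mul, ← map_mul] at h
  have hcross : P * Q' = P' * Q := RatFunc.algebraMap_injective K h
  rw [div_eq_div_iff hQ hQ', ← eval_mul, ← eval_mul, hcross]

lemma isRegularAt_of_simple_root_mul {p : K[X]} (hp : p.IsRoot r)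
    (hp' : p.derivative.eval r ≠ 0)
    (h : HasValueAt (algebraMap K[X] (RatFunc K) p * F) r 0) : IsRegularAt F r := by
  obtain ⟨P, Q, hPQ, hQ, hv⟩ := h
  have hP : P.IsRoot r := (div_eq_zero_iff.mp hv).resolve_right hQ
  obtain ⟨P₁, rfl⟩ := dvd_iff_isRoot.mpr hP
  obtain ⟨p₁, rfl⟩ := dvd_iff_isRoot.mpr hp
  have hp₁ : p₁.eval r ≠ 0 := by simpa [derivative_mul] using hp'
  refine ⟨P₁, p₁ * Q, ?_, by simp [hp₁, hQ]⟩
  have hQ₀ := algebraMap_ratFunc_ne_zero_of_eval_ne_zero hQ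
  have hp₁₀ := algebraMap_ratFunc_ne_zero_of_eval_ne_zero hp₁
  have hX : algebraMap K[X] (RatFunc K) (X - C r) ≠ 0 :=
    RatFunc.algebraMap_ne_zero (X_sub_C_ne_zero r)
  rw [eq_div_iff hQ₀, map_mul, map_mul] at hPQ
  rw [map_mul, eq_div_iff (mul_ne_zero hp₁₀ hQ₀)]
  apply mul_left_cancel₀ hX
  linear_combination hPQ

theorem isRegularAt_iff_eq_zero {p : K[X]} (hp : p.IsRoot r) (hp' : p.derivative.eval r ≠ 0)
    (h : HasValueAt (algebraMap K[X] (RatFunc K) p * F) r v) : IsRegularAt F r ↔ v = 0 := by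
  constructor
  · intro hF
    obtain ⟨w, hw⟩ := isRegularAt_iff_exists_hasValueAt.mp hF
    rw [h.unique ((hasValueAt_algebraMap p r).mul hw), hp.eq_zero, zero_mul]
  · rintro rfl
    exact h.isRegularAt_of_simple_root_mul hp hp'

end HasValueAt

end Regular

lemma sum_powerset_nonempty_mul_prod_eq_add {ι R : Type*} [DecidableEq ι] [CommSemiring R]
    {s : Finset ι} {i : ι} (hi : i ∈ s) (c : Finset ι → R) (y : ι → R) :
    ∑ t ∈ s.powerset.filter Finset.Nonempty, c t * ∏ j ∈ t, y j =
      ∑ t ∈ (s.erase i).powerset.filter Finset.Nonempty, c t * ∏ j ∈ t, y j +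
        y i * ∑ t ∈ (s.erase i).powerset, c (insert i t) * ∏ j ∈ t, y j := by
  conv_lhs => rw [← Finset.insert_erase hi]
  rw [Finset.sum_filter, Finset.sum_powerset_insert (Finset.notMem_erase i s),
    ← Finset.sum_filter, Finset.mul_sum]
  congr 1
  refine Finset.sum_congr rfl fun t ht => ?_
  have hit : i ∉ t := fun h => Finset.notMem_erase i s (Finset.mem_powerset.mp ht h)
  rw [if_pos (Finset.insert_nonempty i t), Finset.prod_insert hit, mul_left_comm]

section PolarPart

variable {J K : Type*} [DecidableEq J] [Field K] {S : Finset J} {W₀ : J} {r : K}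

theorem hasValueAt_mul_sum_mul_prod_inv {p : J → K[X]} (hW₀ : W₀ ∈ S) (hp₀ : p W₀ ≠ 0)
    (hroot : (p W₀).IsRoot r) (hp : ∀ W ∈ S.erase W₀, (p W).eval r ≠ 0) (c : Finset J → K) :
    HasValueAt
      (algebraMap K[X] (RatFunc K) (p W₀) * ∑ J' ∈ S.powerset.filter Finset.Nonempty,
        RatFunc.C (c J') * ∏ W ∈ J', (algebraMap K[X] (RatFunc K) (p W))⁻¹)
      r (∑ J' ∈ (S.erase W₀).powerset, c (insert W₀ J') * ∏ W ∈ J', ((p W).eval r)⁻¹) := by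
  have hterm (a : K) {J' : Finset J} (hJ' : J' ∈ (S.erase W₀).powerset) :
      HasValueAt (RatFunc.C a * ∏ W ∈ J', (algebraMap K[X] (RatFunc K) (p W))⁻¹) r
        (a * ∏ W ∈ J', ((p W).eval r)⁻¹) :=
    (hasValueAt_C a r).mul <| .prod fun W hW =>
      (hasValueAt_algebraMap (p W) r).inv (hp W (Finset.mem_powerset.mp hJ' hW))
  rw [sum_powerset_nonempty_mul_prod_eq_add hW₀, mul_add,
    mul_inv_cancel_left₀ (RatFunc.algebraMap_ne_zero hp₀)]
  have hA := HasValueAt.sum (s := (S.erase W₀).powerset.filter Finset.Nonempty)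
    fun J' hJ' => hterm (c J') (Finset.mem_of_mem_filter J' hJ')
  have hB := HasValueAt.sum fun J' hJ' => hterm (c (insert W₀ J')) hJ'
  simpa only [hroot.eq_zero, zero_mul, zero_add] using
    ((hasValueAt_algebraMap (p W₀) r).mul hA).add hB

lemma eval_linear_neg_div {a₀ : K} (ha₀ : a₀ ≠ 0) (a b b₀ : K) :
    (C a * X + C b).eval (-b₀ / a₀) = (a₀ * b - a * b₀) / a₀ := by
  simp only [eval_add, eval_mul, eval_C, eval_X]
  field_simp
  ring

theorem stmt_5_general (a b : J → K) (c : Finset J → K) {Z : RatFunc K}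
    (hZ : Z = ∑ J' ∈ S.powerset.filter Finset.Nonempty,
      RatFunc.C (c J') * ∏ W ∈ J', (RatFunc.C (a W) * RatFunc.X + RatFunc.C (b W))⁻¹)
    (hW₀ : W₀ ∈ S) (ha₀ : a W₀ ≠ 0) (hres : ∀ W ∈ S, W ≠ W₀ → b W₀ * a W ≠ b W * a W₀)
    (hr : r = -b W₀ / a W₀) {R : K}
    (hR : R = ∑ J' ∈ (S.erase W₀).powerset,
      c (insert W₀ J') * ∏ W ∈ J', a W₀ / (a W₀ * b W - a W * b W₀)) :
    HasValueAt ((RatFunc.C (a W₀) * RatFunc.X + RatFunc.C (b W₀)) * Z) r R ∧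
      (IsRegularAt Z r ↔ R = 0) := by
  let p (W : J) : K[X] := C (a W) * X + C (b W)
  have hp_eval (W : J) : (p W).eval r = (a W₀ * b W - a W * b W₀) / a W₀ :=
    hr ▸ eval_linear_neg_div ha₀ (a W) (b W) (b W₀)
  have hroot : (p W₀).IsRoot r := by simp [IsRoot, hp_eval]
  have hsimple : (p W₀).derivative.eval r ≠ 0 := by simpa [p] using ha₀
  have hp₀ : p W₀ ≠ 0 := fun h => hsimple (by rw [h, derivative_zero, eval_zero])
  have hp (W : J) (hW : W ∈ S.erase W₀) : (p W).eval r ≠ 0 := by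
    obtain ⟨hne, hWS⟩ := Finset.mem_erase.mp hW
    rw [hp_eval]
    refine div_ne_zero (fun h => hres W hWS hne ?_) ha₀
    linear_combination -h
  have hmap (W : J) : algebraMap K[X] (RatFunc K) (p W) =
      RatFunc.C (a W) * RatFunc.X + RatFunc.C (b W) := by simp [p]
  have hval : HasValueAt (algebraMap K[X] (RatFunc K) (p W₀) * Z) r R := by
    simpa only [hZ, hR, hmap, hp_eval, inv_div] using
      hasValueAt_mul_sum_mul_prod_inv hW₀ hp₀ hroot hp c
  exact ⟨hmap W₀ ▸ hval, hval.isRegularAt_iff_eq_zero hroot hsimple⟩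

end PolarPart

/-- For the univariate topological zeta function
`Z(s) = Σ_{∅≠J'⊆J} c_{J'} Π_{W∈J'} 1/(N_W s + n_W)` and a component `W₀` with
`n_{W₀} N_W ≠ n_W N_{W₀}` for all `W ≠ W₀`, setting `r = -n_{W₀}/N_{W₀}`:
(1) `(N_{W₀} s + n_{W₀}) Z(s)` is regular at `r` with value
`R = Σ_{J'⊆J∖{W₀}} c_{J'∪{W₀}} Π_{W∈J'} N_{W₀}/(N_{W₀} n_W − N_W n_{W₀})`;
(2) `Z` has a pole at `r` (necessarily of order one) iff `R ≠ 0`. -/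
theorem stmt_5 {J : Type*} [Fintype J] [DecidableEq J]
    (N n : J → ℕ) (hN : ∀ W, 0 < N W) (hn : ∀ W, 0 < n W)
    (c : Finset J → ℤ)
    (Z : RatFunc ℂ)
    (hZ : Z = ∑ J' ∈ Finset.univ.powerset.filter Finset.Nonempty,
      (c J' : RatFunc ℂ) *
        ∏ W ∈ J', ((N W : RatFunc ℂ) * RatFunc.X + (n W : RatFunc ℂ))⁻¹)
    (W₀ : J)
    (hres : ∀ W, W ≠ W₀ → n W₀ * N W ≠ n W * N W₀)
    (r : ℂ) (hr : r = -(n W₀ : ℂ) / (N W₀ : ℂ))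
    (R : ℂ)
    (hR : R = ∑ J' ∈ (Finset.univ.erase W₀).powerset,
      (c (insert W₀ J') : ℂ) *
        ∏ W ∈ J', (N W₀ : ℂ) / ((N W₀ : ℂ) * (n W : ℂ) - (N W : ℂ) * (n W₀ : ℂ))) :
    (∃ P Q : Polynomial ℂ,
      ((N W₀ : RatFunc ℂ) * RatFunc.X + (n W₀ : RatFunc ℂ)) * Z
          = algebraMap (Polynomial ℂ) (RatFunc ℂ) P / algebraMap (Polynomial ℂ) (RatFunc ℂ) Q ∧
        Q.eval r ≠ 0 ∧ P.eval r / Q.eval r = R) ∧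
    (R ≠ 0 → ¬ ∃ P Q : Polynomial ℂ,
      Z = algebraMap (Polynomial ℂ) (RatFunc ℂ) P / algebraMap (Polynomial ℂ) (RatFunc ℂ) Q ∧
        Q.eval r ≠ 0) ∧
    (R = 0 → ∃ P Q : Polynomial ℂ,
      Z = algebraMap (Polynomial ℂ) (RatFunc ℂ) P / algebraMap (Polynomial ℂ) (RatFunc ℂ) Q ∧
        Q.eval r ≠ 0) := by
  obtain ⟨hval, hreg⟩ := stmt_5_general (S := Finset.univ) (fun W => (N W : ℂ)) (fun W => (n W : ℂ))
    (fun J' => (c J' : ℂ)) (by simpa using hZ) (Finset.mem_univ W₀)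
    (Nat.cast_ne_zero.mpr (hN W₀).ne') (fun W _ hW => mod_cast hres W hW) hr hR
  simp only [map_natCast] at hval
  exact ⟨hval, mt hreg.mp, hreg.mpr⟩
end
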